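/- arXiv:1311.3512 — 3 statements merged into one kernel-verified Lean document; each statement's English description precedes it below -/
import Mathlib

section
/- Let α ∈ (−1,1), let f(t) = (1−t)log(1−t) + (1+t)log(1+t) (extended continuously by f(±1) = 2 log 2), and define g(x) := ((α−x)/2)·f((α+x)/2) + ((x−1)/2)·f((x+1)/2) for x ∈ [α,1). Then lim_{x→1⁻} g(x) = ((α−1)/2)·f((α+1)/2) = g(α), and g(x) < g(α) for every x ∈ (α,1). -/
/-!
The function `fLog` is strictly convex on `[-1, 1]`, being the sum of `φ (1 - t)` and `φ (1 + t)`
with `φ s = s * log s`. The point `(α + 1) / 2` is the convex combination of `(α + x) / 2` and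
`(x + 1) / 2` with weights `(x - α) / (1 - α)` and `(1 - x) / (1 - α)`, so the strict inequality
`gPole α x < gPole α α` is Jensen's inequality for `fLog`, multiplied by `-(1 - α) / 2`.
The limit at `1` follows from continuity of `φ` on the whole real line.
-/

/-- `f(t) = (1-t)log(1-t) + (1+t)log(1+t)`.  Since `Real.log 0 = 0` in Lean, this formula
automatically realizes the continuous extension `f(±1) = 2 log 2`. -/
noncomputable def fLog (t : ℝ) : ℝ :=
  (1 - t) * Real.log (1 - t) + (1 + t) * Real.log (1 + t)

/-- The nonlocal contribution (up to an additive constant depending only on `α`) of the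
triangular wave on `[α,1]` vanishing at `α`, `x` and `1`. -/
noncomputable def gPole (α x : ℝ) : ℝ :=
  ((α - x) / 2) * fLog ((α + x) / 2) + ((x - 1) / 2) * fLog ((x + 1) / 2)

lemma continuous_fLog : Continuous fLog :=
  (Real.continuous_mul_log.comp (by fun_prop : Continuous fun t : ℝ => 1 - t)).add
    (Real.continuous_mul_log.comp (by fun_prop : Continuous fun t : ℝ => 1 + t))

lemma strictConvexOn_fLog : StrictConvexOn ℝ (Set.Icc (-1) 1) fLog := by
  refine ⟨convex_Icc _ _, fun u hu v hv huv a b ha hb hab => ?_⟩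
  obtain ⟨hu₁, hu₂⟩ := hu
  obtain ⟨hv₁, hv₂⟩ := hv
  have h₁ := Real.strictConvexOn_mul_log.2 (Set.mem_Ici.2 (sub_nonneg.2 hu₂))
    (Set.mem_Ici.2 (sub_nonneg.2 hv₂)) (fun h => huv (by linarith)) ha hb hab
  have h₂ := Real.strictConvexOn_mul_log.2 (x := 1 + u) (Set.mem_Ici.2 (by linarith))
    (y := 1 + v) (Set.mem_Ici.2 (by linarith)) (fun h => huv (by linarith)) ha hb hab
  simp only [smul_eq_mul] at h₁ h₂ ⊢
  have e₁ : a * (1 - u) + b * (1 - v) = 1 - (a * u + b * v) := by linear_combination hab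
  have e₂ : a * (1 + u) + b * (1 + v) = 1 + (a * u + b * v) := by linear_combination hab
  rw [e₁] at h₁
  rw [e₂] at h₂
  unfold fLog
  linarith

/-- For `α ∈ (-1,1)`, the function `g(x) = ((α−x)/2)f((α+x)/2)
+ ((x−1)/2)f((x+1)/2)` on `[α,1)` satisfies `lim_{x→1⁻} g(x) = ((α−1)/2)f((α+1)/2) = g(α)`,
and `g(x) < g(α)` for every `x ∈ (α,1)`. -/
theorem nonlocal_contribution_below_boundary_value (α : ℝ) (hα : α ∈ Set.Ioo (-1 : ℝ) 1) :
    Filter.Tendsto (gPole α) (nhdsWithin 1 (Set.Iio 1))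
        (nhds (((α - 1) / 2) * fLog ((α + 1) / 2))) ∧
      ((α - 1) / 2) * fLog ((α + 1) / 2) = gPole α α ∧
      ∀ x ∈ Set.Ioo α 1, gPole α x < gPole α α := by
  obtain ⟨hα₀, hα₁⟩ := hα
  have hgα : ((α - 1) / 2) * fLog ((α + 1) / 2) = gPole α α := by simp [gPole]
  refine ⟨?_, hgα, fun x hx => ?_⟩
  · have hc : Continuous (gPole α) := by
      have := continuous_fLog
      unfold gPole
      fun_prop
    have hg1 : gPole α 1 = ((α - 1) / 2) * fLog ((α + 1) / 2) := by simp [gPole]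
    rw [← hg1]
    exact hc.continuousWithinAt
  · obtain ⟨hx₀, hx₁⟩ := hx
    have hpos : 0 < 1 - α := by linarith
    have hJ := strictConvexOn_fLog.2 (x := (α + x) / 2) ⟨by linarith, by linarith⟩
      (y := (x + 1) / 2) ⟨by linarith, by linarith⟩ (fun h => by linarith)
      (div_pos (sub_pos.2 hx₀) hpos) (div_pos (sub_pos.2 hx₁) hpos)
      (by field_simp; ring)
    simp only [smul_eq_mul] at hJ
    have e : (x - α) / (1 - α) * ((α + x) / 2) + (1 - x) / (1 - α) * ((x + 1) / 2)
        = (α + 1) / 2 := by field_simp; ring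
    rw [e, div_mul_eq_mul_div, div_mul_eq_mul_div, ← add_div, lt_div_iff₀ hpos] at hJ
    rw [← hgα]
    unfold gPole
    linarith
end

section
/- Let n ≥ 3 and γ > 0. Then: (a) the axisymmetric configuration with 2n−1 interfaces located at z_i = −1 + i/n (i = 1, …, 2n−1) is not a critical point of E_γ; and (b) the axisymmetric configuration with 2n interfaces located at z_i = −1 + (2i−1)/(2n) (i = 1, …, 2n) is not a critical point of E_γ. In other words, no uniformly distributed axisymmetric pattern with more than four interfaces is a critical point of E_γ for any γ > 0. -/
/-!
Both configurations have mass zero, so `ξ` is an explicit triangular wave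
(`xi_eq`).

For the `2n - 1` interfaces at `-1 + i/n`, the wave satisfies `ξ ≤ 0`, hence `v ≤ 0` on `[0, 1)`.
The interface `z_n = 0` forces `λ = 0`.  One of `k = n + 1`, `k = n + 2` is even; at that interface
the curvature term is negative and `v(z_k) ≤ 0`, which is incompatible with `λ = 0`.

For the `2n` interfaces, put `h = 1/(2n) ≤ 1/6` and `f(z) = z/√(1 - z²)`.  On an interval
`[c - h, c + h]` between consecutive interfaces, `ξ(t) = ± (t - c)`.  Subtracting the equations at
the last three interfaces `1 - 5h`, `1 - 3h`, `1 - h` gives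
`f(1 - 3h) + f(1 - 5h) = 4γ D(1 - 4h)` and `f(1 - h) + f(1 - 3h) = 4γ D(1 - 2h)`, where
`D(c) = ∫_{c-h}^{c+h} (t - c)/(1 - t²) dt`.  Folding the integral about `c` shows
`D(1 - 2h) ≥ 4 D(1 - 4h)` (`four_mul_folded_le`), whereas `f(1 - h) ≤ 3 f(1 - 3h)` and
`f(1 - 5h) > 0` give `f(1 - h) + f(1 - 3h) < 4 (f(1 - 3h) + f(1 - 5h))`: a contradiction.
-/

/-- The axisymmetric step pattern with `n` interfaces located at `z 1 < ⋯ < z n`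
(with `z 0 = -1`, `z (n+1) = 1`): `u(t) = (-1)^(k+1)` for `t ∈ [z k, z (k+1))`,
so `u = -1` on `[-1, z 1)`. -/
noncomputable def pattern (n : ℕ) (z : ℕ → ℝ) (t : ℝ) : ℝ :=
  (-1 : ℝ) ^ (((Finset.Icc 1 n).filter (fun i => z i ≤ t)).card + 1)

/-- The mass `m = (1/2)∫_{-1}^1 u(t) dt`. -/
noncomputable def mass (n : ℕ) (z : ℕ → ℝ) : ℝ :=
  (1 / 2) * ∫ t in (-1 : ℝ)..1, pattern n z t

/-- `ξ(t) = ∫_{-1}^t (u(s) - m) ds`. -/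
noncomputable def xi (n : ℕ) (z : ℕ → ℝ) (t : ℝ) : ℝ :=
  ∫ s in (-1 : ℝ)..t, (pattern n z s - mass n z)

/-- The potential `v(t) = ∫_0^t ξ(s)/(1-s²) ds`. -/
noncomputable def pot (n : ℕ) (z : ℕ → ℝ) (t : ℝ) : ℝ :=
  ∫ s in (0 : ℝ)..t, xi n z s / (1 - s ^ 2)

/-- `z` is an axisymmetric configuration with `n` interfaces:
`-1 = z 0 < z 1 < ⋯ < z n < z (n+1) = 1`. -/
def IsConfig (n : ℕ) (z : ℕ → ℝ) : Prop :=
  z 0 = -1 ∧ z (n + 1) = 1 ∧ ∀ i j, i < j → j ≤ n + 1 → z i < z j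

/-- The configuration is a critical point of `E_γ`: the Euler–Lagrange equation
`κ_g(z_k) + 4γ v(z_k) = λ` holds at every interface `z 1, …, z n`, with a single
constant `λ`; here `κ_g(z_k) = (-1)^(k+1) z_k / √(1 - z_k²)` is the signed geodesic
curvature of the interface circle with respect to the outer normal of `{u = 1}`. -/
def IsCritical (γ : ℝ) (n : ℕ) (z : ℕ → ℝ) : Prop :=
  ∃ lam : ℝ, ∀ k, 1 ≤ k → k ≤ n →
    (-1 : ℝ) ^ (k + 1) * z k / Real.sqrt (1 - z k ^ 2) + 4 * γ * pot n z (z k) = lam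

open Set MeasureTheory

/-! ### The pattern and its primitive -/

lemma pattern_eq {n : ℕ} {z : ℕ → ℝ} (hz : IsConfig n z) {k : ℕ} (hk : k ≤ n) {t : ℝ}
    (h1 : z k ≤ t) (h2 : t < z (k + 1)) : pattern n z t = (-1) ^ (k + 1) := by
  have hs : (Finset.Icc 1 n).filter (fun i => z i ≤ t) = Finset.Icc 1 k := by
    ext i
    simp only [Finset.mem_filter, Finset.mem_Icc]
    constructor
    · rintro ⟨⟨hi1, hi2⟩, hi⟩
      refine ⟨hi1, ?_⟩
      by_contra hlt
      rcases Nat.lt_or_ge (k + 1) i with h | h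
      · linarith [hz.2.2 (k + 1) i h (by omega)]
      · have : i = k + 1 := by omega
        subst this
        linarith
    · rintro ⟨hi1, hi2⟩
      refine ⟨⟨hi1, by omega⟩, ?_⟩
      rcases hi2.lt_or_eq with h | h
      · linarith [hz.2.2 i k h (by omega)]
      · rw [h]; exact h1
  unfold pattern
  rw [hs, Nat.card_Icc]
  simp

lemma pattern_piece {n : ℕ} {z : ℕ → ℝ} (hz : IsConfig n z) {k : ℕ} (hk : k ≤ n) {t : ℝ}
    (h1 : z k ≤ t) (h2 : t ≤ z (k + 1)) :
    IntervalIntegrable (pattern n z) volume (z k) t ∧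
      ∫ s in (z k)..t, pattern n z s = (-1) ^ (k + 1) * (t - z k) := by
  have key : ∀ᵐ s : ℝ, s ∈ uIoc (z k) t → (fun _ => (-1 : ℝ) ^ (k + 1)) s = pattern n z s := by
    filter_upwards [Measure.ae_ne volume t] with s hs hmem
    rw [uIoc_of_le h1] at hmem
    exact (pattern_eq hz hk hmem.1.le (lt_of_lt_of_le (lt_of_le_of_ne hmem.2 hs) h2)).symm
  constructor
  · have hc : IntervalIntegrable (fun _ : ℝ => (-1 : ℝ) ^ (k + 1)) volume (z k) t :=
      intervalIntegrable_const
    refine hc.congr_ae ?_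
    exact (ae_restrict_iff' measurableSet_uIoc).2 key
  · rw [← intervalIntegral.integral_congr_ae key, intervalIntegral.integral_const, smul_eq_mul]
    ring

/-- The primitive of the pattern is determined by its values `A k` at the interfaces. -/
lemma pattern_primitive {n : ℕ} {z A : ℕ → ℝ} (hz : IsConfig n z) (hA0 : A 0 = 0)
    (hA : ∀ k ≤ n, A (k + 1) = A k + (-1) ^ (k + 1) * (z (k + 1) - z k)) :
    ∀ k ≤ n, ∀ t, z k ≤ t → t ≤ z (k + 1) →
      IntervalIntegrable (pattern n z) volume (-1) t ∧
      ∫ s in (-1 : ℝ)..t, pattern n z s = A k + (-1) ^ (k + 1) * (t - z k) := by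
  intro k
  induction k with
  | zero =>
    intro hk t h1 h2
    have := pattern_piece hz hk h1 h2
    rw [hz.1] at this
    rw [hA0, hz.1, this.2, zero_add ((-1 : ℝ) ^ _ * _)]
    exact ⟨this.1, rfl⟩
  | succ k ih =>
    intro hk t h1 h2
    obtain ⟨i1, e1⟩ := ih (by omega) (z (k + 1))
      (hz.2.2 k (k + 1) (by omega) (by omega)).le le_rfl
    obtain ⟨i2, e2⟩ := pattern_piece hz hk h1 h2
    refine ⟨i1.trans i2, ?_⟩
    rw [← intervalIntegral.integral_add_adjacent_intervals i1 i2, e1, e2, hA k (by omega)]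

lemma pattern_integrable {n : ℕ} {z A : ℕ → ℝ} (hz : IsConfig n z) (hA0 : A 0 = 0)
    (hA : ∀ k ≤ n, A (k + 1) = A k + (-1) ^ (k + 1) * (z (k + 1) - z k)) :
    IntervalIntegrable (pattern n z) volume (-1) 1 := by
  have := (pattern_primitive hz hA0 hA n le_rfl (z (n + 1))
    (hz.2.2 n (n + 1) (by omega) le_rfl).le le_rfl).1
  rwa [hz.2.1] at this

lemma mass_eq_zero {n : ℕ} {z A : ℕ → ℝ} (hz : IsConfig n z) (hA0 : A 0 = 0)
    (hA : ∀ k ≤ n, A (k + 1) = A k + (-1) ^ (k + 1) * (z (k + 1) - z k))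
    (hA1 : A (n + 1) = 0) : mass n z = 0 := by
  have := (pattern_primitive hz hA0 hA n le_rfl (z (n + 1))
    (hz.2.2 n (n + 1) (by omega) le_rfl).le le_rfl).2
  rw [← hA n le_rfl, hA1, hz.2.1] at this
  rw [mass, this, mul_zero]

/-- When the mass vanishes, `ξ` is the piecewise affine function with value `A k` at `z k`. -/
lemma xi_eq {n : ℕ} {z A : ℕ → ℝ} (hz : IsConfig n z) (hA0 : A 0 = 0)
    (hA : ∀ k ≤ n, A (k + 1) = A k + (-1) ^ (k + 1) * (z (k + 1) - z k))
    (hA1 : A (n + 1) = 0) {k : ℕ} (hk : k ≤ n) {t : ℝ} (h1 : z k ≤ t) (h2 : t ≤ z (k + 1)) :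
    xi n z t = A k + (-1) ^ (k + 1) * (t - z k) := by
  rw [xi, mass_eq_zero hz hA0 hA hA1]
  simp only [sub_zero]
  exact (pattern_primitive hz hA0 hA k hk t h1 h2).2

lemma exists_piece {n : ℕ} {z : ℕ → ℝ} (hz : IsConfig n z) {t : ℝ} (h1 : -1 ≤ t) :
    ∀ k ≤ n, t ≤ z (k + 1) → ∃ j ≤ n, z j ≤ t ∧ t ≤ z (j + 1) := by
  intro k
  induction k with
  | zero => intro hk h2; exact ⟨0, hk, by rw [hz.1]; exact h1, h2⟩
  | succ k ih =>
    intro hk h2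
    rcases le_total t (z (k + 1)) with h | h
    · exact ih (by omega) h
    · exact ⟨k + 1, hk, h, h2⟩

/-! ### The potential -/

lemma potential_integrable {n : ℕ} {z : ℕ → ℝ}
    (hi : IntervalIntegrable (pattern n z) volume (-1) 1) {a b : ℝ}
    (ha : -1 < a) (hb : b < 1) (hab : a ≤ b) :
    IntervalIntegrable (fun s => xi n z s / (1 - s ^ 2)) volume a b := by
  have hc : ContinuousOn (xi n z) (Icc (-1) 1) := by
    have : IntegrableOn (fun s => pattern n z s - mass n z) (uIcc (-1) 1) :=
      (intervalIntegrable_iff' (by simp)).1 (hi.sub intervalIntegrable_const)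
    have := intervalIntegral.continuousOn_primitive_interval this
    rwa [uIcc_of_le (by norm_num)] at this
  apply ContinuousOn.intervalIntegrable
  rw [uIcc_of_le hab]
  refine (hc.mono (Icc_subset_Icc ha.le hb.le)).div (by fun_prop) ?_
  intro s hs
  have h1 := hs.1
  have h2 := hs.2
  nlinarith

lemma pot_sub {n : ℕ} {z : ℕ → ℝ}
    (hi : IntervalIntegrable (pattern n z) volume (-1) 1) {a b : ℝ}
    (ha : 0 ≤ a) (hab : a ≤ b) (hb : b < 1) :
    pot n z b - pot n z a = ∫ s in a..b, xi n z s / (1 - s ^ 2) := by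
  have h1 := potential_integrable hi (a := 0) (b := a) (by norm_num) (by linarith) ha
  have h2 := potential_integrable hi (a := a) (b := b) (by linarith) hb hab
  rw [pot, pot, ← intervalIntegral.integral_add_adjacent_intervals h1 h2]
  ring

/-! ### The configuration with `2n - 1` interfaces -/

lemma odd_case (n : ℕ) (hn : 3 ≤ n) (γ : ℝ) (hγ : 0 < γ) :
    ¬ IsCritical γ (2 * n - 1) (fun i => -1 + (i : ℝ) / (n : ℝ)) := by
  have hn0 : (0 : ℝ) < n := by exact_mod_cast (by omega : 0 < n)
  set z : ℕ → ℝ := fun i => -1 + (i : ℝ) / (n : ℝ) with hzdef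
  have hN : 2 * n - 1 + 1 = 2 * n := by omega
  have hz : IsConfig (2 * n - 1) z := by
    refine ⟨by simp [hzdef], ?_, ?_⟩
    · rw [hN]
      simp only [hzdef]
      push_cast
      field_simp
      norm_num
    · intro i j hij _
      have : (i : ℝ) < j := by exact_mod_cast hij
      simp only [hzdef]
      gcongr
  set A : ℕ → ℝ := fun k => ((-1) ^ k - 1) / (2 * n) with hAdef
  have hA0 : A 0 = 0 := by simp [hAdef]
  have hA : ∀ k ≤ 2 * n - 1, A (k + 1) = A k + (-1) ^ (k + 1) * (z (k + 1) - z k) := by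
    intro k _
    simp only [hAdef, hzdef]
    push_cast
    field_simp
    ring
  have hA1 : A (2 * n - 1 + 1) = 0 := by
    rw [hN]
    simp [hAdef]
  have hi := pattern_integrable hz hA0 hA
  have hxi : ∀ t, -1 ≤ t → t ≤ 1 → xi (2 * n - 1) z t ≤ 0 := by
    intro t h1 h2
    obtain ⟨k, hk, hk1, hk2⟩ := exists_piece hz h1 (2 * n - 1) le_rfl (by rw [hz.2.1]; exact h2)
    rw [xi_eq hz hA0 hA hA1 hk hk1 hk2]
    have hstep : z (k + 1) = z k + 1 / n := by
      simp only [hzdef]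
      push_cast
      ring
    rcases neg_one_pow_eq_or ℝ k with h | h
    · simp only [hAdef, pow_succ, h]
      norm_num
      exact hk1
    · simp only [hAdef, pow_succ, h]
      have : ((-1 : ℝ) - 1) / (2 * n) = - (1 / n) := by field_simp; norm_num
      rw [this]
      linarith
  rintro ⟨lam, hcrit⟩
  have hzn : z n = 0 := by
    simp only [hzdef]
    field_simp
    norm_num
  have hlam : lam = 0 := by
    have := hcrit n (by omega) (by omega)
    rw [hzn] at this
    simpa [pot] using this.symm
  obtain ⟨k, hk1, hk2, hke⟩ : ∃ k, n < k ∧ k ≤ 2 * n - 1 ∧ Even k := by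
    rcases Nat.even_or_odd n with h | h
    · exact ⟨n + 2, by omega, by omega, by rw [Nat.even_add]; simp [h]⟩
    · exact ⟨n + 1, by omega, by omega, h.add_one⟩
  have hzk0 : 0 < z k := by
    rw [← hzn]; exact hz.2.2 n k hk1 (by omega)
  have hzk1 : z k < 1 := by
    rw [← hz.2.1]; exact hz.2.2 k _ (by omega) le_rfl
  have hv : pot (2 * n - 1) z (z k) ≤ 0 := by
    have : 0 ≤ ∫ s in (0 : ℝ)..(z k), -(xi (2 * n - 1) z s / (1 - s ^ 2)) := by
      apply intervalIntegral.integral_nonneg hzk0.le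
      intro s hs
      have h1 := hs.1
      have h2 := hs.2
      have := hxi s (by linarith) (by linarith)
      rw [← neg_div]
      exact div_nonneg (by linarith) (by nlinarith)
    rw [intervalIntegral.integral_neg] at this
    rw [pot]
    linarith
  have hκ : 0 < z k / Real.sqrt (1 - z k ^ 2) :=
    div_pos hzk0 (Real.sqrt_pos.2 (by nlinarith))
  have := hcrit k (by omega) hk2
  rw [hlam, hke.add_one.neg_one_pow, neg_one_mul, neg_div] at this
  nlinarith [mul_nonneg hγ.le (neg_nonneg.2 hv)]

/-! ### The configuration with `2n` interfaces -/

/-- The folding of `∫_{c-h}^{c+h} (t - c)/(1 - t²) dt` about the midpoint `c`. -/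
lemma integral_fold {c h : ℝ} (hh : 0 ≤ h) (h1 : -1 < c - h) (h2 : c + h < 1) :
    ∫ t in (c - h)..(c + h), (t - c) / (1 - t ^ 2) =
      ∫ s in (0 : ℝ)..h, 4 * c * s ^ 2 / ((1 - (c + s) ^ 2) * (1 - (c - s) ^ 2)) := by
  have hint : ∀ a b : ℝ, -1 < a → a ≤ b → b < 1 →
      IntervalIntegrable (fun t : ℝ => (t - c) / (1 - t ^ 2)) volume a b := by
    intro a b ha hab hb
    apply ContinuousOn.intervalIntegrable
    rw [uIcc_of_le hab]
    refine ContinuousOn.div (by fun_prop) (by fun_prop) ?_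
    intro s hs
    have h1 := hs.1
    have h2 := hs.2
    nlinarith
  have hc1 : IntervalIntegrable (fun s : ℝ => (c + s - c) / (1 - (c + s) ^ 2)) volume 0 h := by
    apply ContinuousOn.intervalIntegrable
    rw [uIcc_of_le hh]
    refine ContinuousOn.div (by fun_prop) (by fun_prop) ?_
    intro s hs
    have h1 := hs.1
    have h2 := hs.2
    nlinarith
  have hc2 : IntervalIntegrable (fun s : ℝ => (c - s - c) / (1 - (c - s) ^ 2)) volume 0 h := by
    apply ContinuousOn.intervalIntegrable
    rw [uIcc_of_le hh]
    refine ContinuousOn.div (by fun_prop) (by fun_prop) ?_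
    intro s hs
    have h1 := hs.1
    have h2 := hs.2
    nlinarith
  have e1 := intervalIntegral.integral_comp_add_left (a := 0) (b := h)
    (fun t : ℝ => (t - c) / (1 - t ^ 2)) c
  have e2 := intervalIntegral.integral_comp_sub_left (a := 0) (b := h)
    (fun t : ℝ => (t - c) / (1 - t ^ 2)) c
  simp only [add_zero, sub_zero] at e1 e2
  rw [← intervalIntegral.integral_add_adjacent_intervals
    (hint (c - h) c h1 (by linarith) (by linarith))
    (hint c (c + h) (by linarith) (by linarith) h2), ← e1, ← e2,
    ← intervalIntegral.integral_add hc2 hc1]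
  apply intervalIntegral.integral_congr
  intro s hs
  rw [uIcc_of_le hh] at hs
  have hs1 := hs.1
  have hs2 := hs.2
  have n1 : 1 - (c + s) ^ 2 ≠ 0 := by nlinarith
  have n2 : 1 - (c - s) ^ 2 ≠ 0 := by nlinarith
  simp only
  field_simp
  ring

/-- Pointwise comparison of the folded integrands at the midpoints `1 - 4h` and `1 - 2h`.
The factors vanishing at `1` contribute `(16h² - s²)/(4h² - s²) ≥ 4`; the remaining ones
contribute at least `1`. -/
lemma four_mul_integrand_le {h s : ℝ} (hh : 0 < h) (hh6 : h ≤ 1 / 6) (hs : 0 ≤ s) (hsh : s ≤ h) :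
    4 * (4 * (1 - 4 * h) * s ^ 2 /
        ((1 - (1 - 4 * h + s) ^ 2) * (1 - (1 - 4 * h - s) ^ 2))) ≤
      4 * (1 - 2 * h) * s ^ 2 /
        ((1 - (1 - 2 * h + s) ^ 2) * (1 - (1 - 2 * h - s) ^ 2)) := by
  have f1 : (1 - (1 - 4 * h + s) ^ 2) * (1 - (1 - 4 * h - s) ^ 2) =
      (16 * h ^ 2 - s ^ 2) * ((2 - 4 * h) ^ 2 - s ^ 2) := by ring
  have f2 : (1 - (1 - 2 * h + s) ^ 2) * (1 - (1 - 2 * h - s) ^ 2) =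
      (4 * h ^ 2 - s ^ 2) * ((2 - 2 * h) ^ 2 - s ^ 2) := by ring
  have hsq : s ^ 2 ≤ h ^ 2 := pow_le_pow_left₀ hs hsh 2
  have hsq0 : 0 ≤ s ^ 2 := sq_nonneg s
  have hh2 : 0 < h ^ 2 := by positivity
  have p1 : 0 < 16 * h ^ 2 - s ^ 2 := by linarith
  have p2 : 0 < 4 * h ^ 2 - s ^ 2 := by linarith
  have p3 : 0 < (2 - 4 * h) ^ 2 - s ^ 2 := by nlinarith
  have p4 : 0 < (2 - 2 * h) ^ 2 - s ^ 2 := by nlinarith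
  have k1 : 4 * (4 * h ^ 2 - s ^ 2) ≤ 16 * h ^ 2 - s ^ 2 := by linarith
  have k2 : (1 - 4 * h) * ((2 - 2 * h) ^ 2 - s ^ 2) ≤
      (1 - 2 * h) * ((2 - 4 * h) ^ 2 - s ^ 2) := by
    have : 0 ≤ h * (h ^ 2 - s ^ 2) := mul_nonneg hh.le (by linarith)
    nlinarith [mul_nonneg hh2.le (by linarith : (0 : ℝ) ≤ 1 / 6 - h)]
  rw [f1, f2, ← mul_div_assoc, div_le_div_iff₀ (mul_pos p1 p3) (mul_pos p2 p4)]
  have k3 := mul_le_mul k1 k2 (mul_nonneg (by linarith) p4.le) p1.le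
  have k4 := mul_le_mul_of_nonneg_left k3 (by positivity : 0 ≤ 4 * s ^ 2)
  linarith

lemma four_mul_folded_le {h : ℝ} (hh : 0 < h) (hh6 : h ≤ 1 / 6) :
    4 * ∫ t in (1 - 4 * h - h)..(1 - 4 * h + h), (t - (1 - 4 * h)) / (1 - t ^ 2) ≤
      ∫ t in (1 - 2 * h - h)..(1 - 2 * h + h), (t - (1 - 2 * h)) / (1 - t ^ 2) := by
  rw [integral_fold hh.le (by linarith) (by linarith),
    integral_fold hh.le (by linarith) (by linarith), ← intervalIntegral.integral_const_mul]
  have hint : ∀ c : ℝ, -1 < c - h → c + h < 1 → IntervalIntegrable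
      (fun s : ℝ => 4 * c * s ^ 2 / ((1 - (c + s) ^ 2) * (1 - (c - s) ^ 2))) volume 0 h := by
    intro c h1 h2
    apply ContinuousOn.intervalIntegrable
    rw [uIcc_of_le hh.le]
    refine ContinuousOn.div (by fun_prop) (by fun_prop) ?_
    intro s hs
    have hs1 := hs.1
    have hs2 := hs.2
    exact mul_ne_zero (by nlinarith) (by nlinarith)
  apply intervalIntegral.integral_mono_on hh.le
    ((hint (1 - 4 * h) (by linarith) (by linarith)).const_mul 4)
    (hint (1 - 2 * h) (by linarith) (by linarith))
  intro s hs
  exact four_mul_integrand_le hh hh6 hs.1 hs.2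

lemma curvature_le {h : ℝ} (hh : 0 < h) (hh6 : h ≤ 1 / 6) :
    (1 - h) / Real.sqrt (1 - (1 - h) ^ 2) ≤
      3 * ((1 - 3 * h) / Real.sqrt (1 - (1 - 3 * h) ^ 2)) := by
  have p1 : 0 < 1 - (1 - h) ^ 2 := by nlinarith
  have p2 : 0 < 1 - (1 - 3 * h) ^ 2 := by nlinarith
  rw [← mul_div_assoc, div_le_div_iff₀ (Real.sqrt_pos.2 p1) (Real.sqrt_pos.2 p2)]
  refine (pow_le_pow_iff_left₀ (mul_nonneg (by linarith) (Real.sqrt_nonneg _))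
    (mul_nonneg (by linarith) (Real.sqrt_nonneg _)) two_ne_zero).1 ?_
  rw [mul_pow, mul_pow, Real.sq_sqrt p1.le, Real.sq_sqrt p2.le]
  have q : 0 ≤ 4 * (1 - 4 * h) ^ 2 - 24 * h ^ 3 := by
    have a1 : (1 / 3 : ℝ) ^ 2 ≤ (1 - 4 * h) ^ 2 := pow_le_pow_left₀ (by norm_num) (by linarith) 2
    have a2 : h ^ 3 ≤ (1 / 6 : ℝ) ^ 3 := pow_le_pow_left₀ hh.le hh6 3
    norm_num at a1 a2
    linarith
  have := mul_nonneg (by linarith : 0 ≤ 3 * h) q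
  linarith

lemma even_case (n : ℕ) (hn : 3 ≤ n) (γ : ℝ) (hγ : 0 < γ) :
    ¬ IsCritical γ (2 * n)
        (fun i => if i = 0 then -1
          else if i ≤ 2 * n then -1 + (2 * (i : ℝ) - 1) / (2 * (n : ℝ)) else 1) := by
  set z : ℕ → ℝ := fun i => if i = 0 then -1
          else if i ≤ 2 * n then -1 + (2 * (i : ℝ) - 1) / (2 * (n : ℝ)) else 1 with hzdef
  have hn3 : (3 : ℝ) ≤ n := by exact_mod_cast hn
  obtain ⟨h, hhdef⟩ : ∃ h : ℝ, h = 1 / (2 * n) := ⟨_, rfl⟩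
  have hnh : (n : ℝ) * h = 1 / 2 := by rw [hhdef]; field_simp
  have hh : 0 < h := by rw [hhdef]; positivity
  have hh6 : h ≤ 1 / 6 := by nlinarith
  have hz0 : z 0 = -1 := by simp [hzdef]
  have hzm : ∀ i, 1 ≤ i → i ≤ 2 * n → z i = -1 + (2 * (i : ℝ) - 1) * h := by
    intro i h1 h2
    simp only [hzdef]
    rw [if_neg (by omega), if_pos h2, hhdef]
    ring
  have hz1 : z (2 * n + 1) = 1 := by simp [hzdef]
  have hz : IsConfig (2 * n) z := by
    refine ⟨hz0, hz1, ?_⟩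
    intro i j hij hj
    rcases Nat.eq_zero_or_pos i with rfl | hi
    · rw [hz0]
      rcases Nat.lt_or_ge (2 * n) j with hj' | hj'
      · rw [show j = 2 * n + 1 by omega, hz1]; norm_num
      · rw [hzm j (by omega) hj']
        have : (1 : ℝ) ≤ j := by exact_mod_cast hij
        nlinarith
    · rw [hzm i hi (by omega)]
      rcases Nat.lt_or_ge (2 * n) j with hj' | hj'
      · rw [show j = 2 * n + 1 by omega, hz1]
        have : (i : ℝ) ≤ 2 * n := by exact_mod_cast (by omega : i ≤ 2 * n)
        nlinarith
      · rw [hzm j (by omega) hj']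
        have : (i : ℝ) < j := by exact_mod_cast hij
        nlinarith
  set A : ℕ → ℝ := fun k => if k = 0 then 0 else if k ≤ 2 * n then (-1) ^ k * h else 0 with hAdef
  have hA0 : A 0 = 0 := by simp [hAdef]
  have hA1 : A (2 * n + 1) = 0 := by simp [hAdef]
  have hAm : ∀ k, 1 ≤ k → k ≤ 2 * n → A k = (-1) ^ k * h := by
    intro k h1 h2
    simp only [hAdef]
    rw [if_neg (by omega), if_pos h2]
  have hA : ∀ k ≤ 2 * n, A (k + 1) = A k + (-1) ^ (k + 1) * (z (k + 1) - z k) := by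
    intro k hk
    rcases Nat.eq_zero_or_pos k with rfl | hk0
    · rw [hA0, hz0, hAm _ (by omega) (by omega), hzm _ (by omega) (by omega)]
      push_cast
      ring
    · rw [hAm k hk0 hk, hzm k hk0 hk]
      rcases hk.lt_or_eq with hk' | rfl
      · rw [hAm (k + 1) (by omega) (by omega), hzm (k + 1) (by omega) (by omega)]
        push_cast
        ring
      · rw [hA1, hz1, pow_succ, Even.neg_one_pow (by simp)]
        push_cast
        linear_combination (-4) * hnh
  have hi := pattern_integrable hz hA0 hA
  -- The last three interfaces, with `n = m + 1` to avoid truncated subtraction.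
  obtain ⟨m, rfl⟩ : ∃ m, n = m + 1 := ⟨n - 1, by omega⟩
  push_cast at hnh
  have za : z (2 * m) = 1 - 4 * h - h := by
    rw [hzm _ (by omega) (by omega)]; push_cast; linear_combination 4 * hnh
  have zb : z (2 * m + 1) = 1 - 4 * h + h := by
    rw [hzm _ (by omega) (by omega)]; push_cast; linear_combination 4 * hnh
  have zc : z (2 * m + 2) = 1 - 2 * h + h := by
    rw [hzm _ (by omega) (by omega)]; push_cast; linear_combination 4 * hnh
  have zb' : z (2 * m + 1) = 1 - 2 * h - h := by rw [zb]; ring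
  have D1 : pot (2 * (m + 1)) z (z (2 * m + 1)) - pot (2 * (m + 1)) z (z (2 * m)) =
      - ∫ t in (1 - 4 * h - h)..(1 - 4 * h + h), (t - (1 - 4 * h)) / (1 - t ^ 2) := by
    rw [pot_sub hi (by rw [za]; linarith) (by rw [za, zb]; linarith) (by rw [zb]; linarith),
      ← intervalIntegral.integral_neg, ← za, ← zb]
    apply intervalIntegral.integral_congr
    intro t ht
    rw [uIcc_of_le (by rw [za, zb]; linarith)] at ht
    simp only
    rw [xi_eq hz hA0 hA hA1 (by omega) ht.1 ht.2, hAm _ (by omega) (by omega), za, pow_succ,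
      Even.neg_one_pow (by simp)]
    ring
  have D2 : pot (2 * (m + 1)) z (z (2 * m + 2)) - pot (2 * (m + 1)) z (z (2 * m + 1)) =
      ∫ t in (1 - 2 * h - h)..(1 - 2 * h + h), (t - (1 - 2 * h)) / (1 - t ^ 2) := by
    rw [pot_sub hi (by rw [zb]; linarith) (by rw [zb, zc]; linarith) (by rw [zc]; linarith),
      ← zb', ← zc]
    apply intervalIntegral.integral_congr
    intro t ht
    rw [uIcc_of_le (by rw [zb, zc]; linarith)] at ht
    simp only
    rw [xi_eq hz hA0 hA hA1 (by omega) ht.1 ht.2, hAm _ (by omega) (by omega), zb']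
    simp only [pow_succ (-1 : ℝ), Even.neg_one_pow (even_two_mul m)]
    ring
  have hD := four_mul_folded_le hh hh6
  rw [← D2] at hD
  have hD' := neg_eq_iff_eq_neg.2 D1
  rintro ⟨lam, hcrit⟩
  have c1 := hcrit (2 * m) (by omega) (by omega)
  have c2 := hcrit (2 * m + 1) (by omega) (by omega)
  have c3 := hcrit (2 * m + 2) (by omega) (by omega)
  have hpow : (-1 : ℝ) ^ (2 * m) = 1 := Even.neg_one_pow (by simp)
  simp only [pow_succ (-1 : ℝ), hpow] at c1 c2 c3
  have F := curvature_le hh hh6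
  have P : 0 < z (2 * m) / Real.sqrt (1 - z (2 * m) ^ 2) := by
    rw [za]
    exact div_pos (by linarith) (Real.sqrt_pos.2 (by nlinarith))
  rw [show 1 - h = z (2 * m + 2) by rw [zc]; ring, show 1 - 3 * h = z (2 * m + 1) by rw [zb]; ring]
    at F
  simp only [one_mul, mul_one, neg_mul, mul_neg, neg_neg, neg_div] at c1 c2 c3
  set v1 := pot (2 * (m + 1)) z (z (2 * m))
  set v2 := pot (2 * (m + 1)) z (z (2 * m + 1))
  set v3 := pot (2 * (m + 1)) z (z (2 * m + 2))
  have hD4 : 4 * (v1 - v2) ≤ v3 - v2 := by linarith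
  have := mul_le_mul_of_nonneg_left hD4 hγ.le
  linarith

/-- Proposition: uniform interface distribution.  For `n ≥ 3` and any
`γ > 0`, neither the uniformly distributed configuration with `2n-1` interfaces at
`z_i = -1 + i/n` nor the one with `2n` interfaces at `z_i = -1 + (2i-1)/(2n)` is a
critical point of `E_γ`:  no uniformly distributed axisymmetric pattern with more than
four interfaces is a critical point. -/
theorem uniform_distribution_not_critical (n : ℕ) (hn : 3 ≤ n) (γ : ℝ) (hγ : 0 < γ) :
    ¬ IsCritical γ (2 * n - 1) (fun i => -1 + (i : ℝ) / (n : ℝ)) ∧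
    ¬ IsCritical γ (2 * n)
        (fun i => if i = 0 then -1
          else if i ≤ 2 * n then -1 + (2 * (i : ℝ) - 1) / (2 * (n : ℝ)) else 1) := by
  exact ⟨odd_case n hn γ hγ, even_case n hn γ hγ⟩
end

section
/- Let γ > 0 and let −1 < z₁ < ⋯ < z_n < 1 with n ≥ 2 be an axisymmetric configuration of mass m = 0 that is a critical point of E_γ. Then z₁ ≥ a/√(1+a²), where a := −(6γ/e + 1/√3) and e is Euler's number. In particular the diameter of the polar cap determined by the first interface z₁ is bounded from below in terms of γ. -/
lemma pattern_measurable (n : ℕ) (z : ℕ → ℝ) : Measurable (pattern n z) := by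
  have h : Measurable
      (fun t : ℝ => ((Finset.Icc 1 n).filter (fun i => z i ≤ t)).card + 1) := by
    simp only [Finset.card_filter]
    refine Measurable.add_const (Finset.measurable_sum _ fun i _ => ?_) _
    exact Measurable.ite measurableSet_Ici measurable_const measurable_const
  exact (measurable_from_nat (f := fun k : ℕ => (-1 : ℝ) ^ k)).comp h

lemma pattern_norm (n : ℕ) (z : ℕ → ℝ) (t : ℝ) : ‖pattern n z t‖ = 1 := by
  simp [pattern]

lemma pattern_integrable_s16 (n : ℕ) (z : ℕ → ℝ) (a b : ℝ) :
    IntervalIntegrable (pattern n z) MeasureTheory.volume a b := by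
  refine (intervalIntegrable_const (c := (1 : ℝ))).mono_fun
    (pattern_measurable n z).aestronglyMeasurable ?_
  filter_upwards with t
  simp only [pattern_norm, norm_one, le_refl]

lemma pattern_first {n : ℕ} {z : ℕ → ℝ} (hz : IsConfig n z) {t : ℝ} (ht : t < z 1) :
    pattern n z t = -1 := by
  have : (Finset.Icc 1 n).filter (fun i => z i ≤ t) = ∅ := by
    rw [Finset.filter_eq_empty_iff]
    intro i hi
    rw [Finset.mem_Icc] at hi
    rcases hi.1.eq_or_lt with h | h
    · subst h; exact not_le.2 ht
    · exact not_le.2 (ht.trans (hz.2.2 1 i h (by omega)))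
  simp [pattern, this]

lemma pattern_second {n : ℕ} (hn : 2 ≤ n) {z : ℕ → ℝ} (hz : IsConfig n z) {t : ℝ}
    (h1 : z 1 ≤ t) (h2 : t < z 2) : pattern n z t = 1 := by
  have : (Finset.Icc 1 n).filter (fun i => z i ≤ t) = {1} := by
    ext i
    rw [Finset.mem_filter, Finset.mem_Icc, Finset.mem_singleton]
    constructor
    · rintro ⟨⟨h, h'⟩, hi⟩
      by_contra hne
      rcases (show 2 ≤ i by omega).eq_or_lt with h3 | h3
      · subst h3; linarith
      · linarith [hz.2.2 2 i h3 (by omega)]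
    · rintro rfl
      exact ⟨⟨le_rfl, by omega⟩, h1⟩
  simp [pattern, this]

lemma integral_first {n : ℕ} {z : ℕ → ℝ} (hz : IsConfig n z) :
    ∫ t in (-1 : ℝ)..z 1, pattern n z t = -(1 + z 1) := by
  have h : -1 < z 1 := by have := hz.2.2 0 1 (by omega) (by omega); rwa [hz.1] at this
  rw [intervalIntegral.integral_congr_Ioo_of_le (g := fun _ => (-1 : ℝ))]
  · simp; ring
  · exact h.le
  · intro t ht
    exact pattern_first hz ht.2

lemma integral_second {n : ℕ} (hn : 2 ≤ n) {z : ℕ → ℝ} (hz : IsConfig n z) {s : ℝ}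
    (h1 : z 1 ≤ s) (h2 : s ≤ z 2) : ∫ t in z 1..s, pattern n z t = s - z 1 := by
  rw [intervalIntegral.integral_congr_Ioo_of_le (g := fun _ => (1 : ℝ))]
  · simp
  · exact h1
  · intro t ht
    exact pattern_second hn hz ht.1.le (ht.2.trans_le h2)

/-- Vanishing mass bounds the second interface: after `z 2` the integral of the pattern can
drop by at most `1 - z 2`. -/
lemma second_le {n : ℕ} (hn : 2 ≤ n) {z : ℕ → ℝ} (hz : IsConfig n z)
    (hm : mass n z = 0) : z 2 ≤ 1 + z 1 := by
  have h12 : z 1 < z 2 := hz.2.2 1 2 (by omega) (by omega)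
  have h2 : z 2 < 1 := by
    have := hz.2.2 2 (n + 1) (by omega) le_rfl; rwa [hz.2.1] at this
  have hI : ∫ t in (-1 : ℝ)..1, pattern n z t = 0 := by
    unfold mass at hm; linarith
  rw [← intervalIntegral.integral_add_adjacent_intervals (b := z 1)
      (pattern_integrable_s16 n z _ _) (pattern_integrable_s16 n z _ _),
    ← intervalIntegral.integral_add_adjacent_intervals (a := z 1) (b := z 2)
      (pattern_integrable_s16 n z _ _) (pattern_integrable_s16 n z _ _),
    integral_first hz, integral_second hn hz h12.le le_rfl] at hI
  have hb := intervalIntegral.norm_integral_le_of_norm_le_const (a := z 2) (b := 1)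
    (f := pattern n z) (C := 1) (fun t _ => (pattern_norm n z t).le)
  rw [Real.norm_eq_abs, abs_of_pos (show (0 : ℝ) < 1 - z 2 by linarith)] at hb
  linarith [(abs_le.1 hb).1]

lemma xi_continuous (n : ℕ) (z : ℕ → ℝ) : Continuous (xi n z) :=
  intervalIntegral.continuous_primitive
    (fun a b => (pattern_integrable_s16 n z a b).sub intervalIntegrable_const) _

lemma xi_second {n : ℕ} (hn : 2 ≤ n) {z : ℕ → ℝ} (hz : IsConfig n z)
    (hm : mass n z = 0) {s : ℝ} (h1 : z 1 ≤ s) (h2 : s ≤ z 2) :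
    xi n z s = s - 1 - 2 * z 1 := by
  unfold xi
  simp only [hm, sub_zero]
  rw [← intervalIntegral.integral_add_adjacent_intervals (b := z 1)
      (pattern_integrable_s16 n z _ _) (pattern_integrable_s16 n z _ _),
    integral_first hz, integral_second hn hz h1 h2]
  ring

lemma quot_integrable (n : ℕ) (z : ℕ → ℝ) {a b : ℝ} (ha : a ∈ Set.Ioo (-1 : ℝ) 1)
    (hb : b ∈ Set.Ioo (-1 : ℝ) 1) :
    IntervalIntegrable (fun s => xi n z s / (1 - s ^ 2)) MeasureTheory.volume a b := by
  apply ContinuousOn.intervalIntegrable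
  refine (xi_continuous n z).continuousOn.div (by fun_prop) fun s hs => ?_
  have hs' : s ∈ Set.Ioo (-1 : ℝ) 1 := Set.OrdConnected.uIcc_subset inferInstance ha hb hs
  nlinarith [hs'.1, hs'.2]

lemma integral_ge_const_mul (n : ℕ) (z : ℕ → ℝ) {a b : ℝ} (hab : a ≤ b)
    (ha : a ∈ Set.Ioo (-1 : ℝ) 1) (hb : b ∈ Set.Ioo (-1 : ℝ) 1) {C : ℝ}
    (h : ∀ s ∈ Set.Icc a b, C ≤ xi n z s / (1 - s ^ 2)) :
    C * (b - a) ≤ ∫ s in a..b, xi n z s / (1 - s ^ 2) := by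
  have := intervalIntegral.integral_mono_on hab
    (intervalIntegrable_const (c := C)) (quot_integrable n z ha hb) h
  simpa [mul_comm] using this

lemma integral_lower {n : ℕ} (hn : 2 ≤ n) {z : ℕ → ℝ} (hz : IsConfig n z)
    (hm : mass n z = 0) (h : z 1 < -1 / 2) :
    -1 / 2 ≤ ∫ s in z 1..z 2, xi n z s / (1 - s ^ 2) := by
  have h0 : -1 < z 1 := by have := hz.2.2 0 1 (by omega) (by omega); rwa [hz.1] at this
  have h12 : z 1 < z 2 := hz.2.2 1 2 (by omega) (by omega)
  have h2 : z 2 ≤ 1 + z 1 := second_le hn hz hm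
  have m1 : z 1 ∈ Set.Ioo (-1 : ℝ) 1 := ⟨h0, by linarith⟩
  have m2 : z 2 ∈ Set.Ioo (-1 : ℝ) 1 := ⟨by linarith, by linarith⟩
  have low : ∀ s, z 1 ≤ s → s ≤ z 2 → s ≤ 1 + 2 * z 1 →
      (-1 : ℝ) ≤ xi n z s / (1 - s ^ 2) := by
    intro s hs1 hs2 hs3
    rw [xi_second hn hz hm hs1 hs2, le_div_iff₀ (by nlinarith)]
    -- `1 - s² = (1 + s)(1 - s) ≥ 1 + s ≥ δ ≥ -ξ(s)`, as `s ≤ 0`.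
    nlinarith
  rcases le_total (z 2) (1 + 2 * z 1) with hc | hc
  · have := integral_ge_const_mul n z h12.le m1 m2 (C := -1)
      (fun s hs => low s hs.1 hs.2 (hs.2.trans hc))
    linarith
  · have mm : 1 + 2 * z 1 ∈ Set.Ioo (-1 : ℝ) 1 := ⟨by linarith, by linarith⟩
    have hA := integral_ge_const_mul n z (by linarith) m1 mm (C := -1)
      (fun s hs => low s hs.1 (hs.2.trans hc) hs.2)
    have hB := integral_ge_const_mul n z hc mm m2 (C := 0) (fun s hs => by
      rw [xi_second hn hz hm (by linarith [hs.1]) hs.2]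
      have := hs.1
      have := hs.2
      exact div_nonneg (by linarith) (by nlinarith))
    rw [← intervalIntegral.integral_add_adjacent_intervals
      (quot_integrable n z m1 mm) (quot_integrable n z mm m2)]
    linarith

lemma curv_le {x : ℝ} (h1 : -1 < x) (hx : x ≤ 1 / 2) :
    x / Real.sqrt (1 - x ^ 2) ≤ 1 / Real.sqrt 3 := by
  have hw : 0 < Real.sqrt (1 - x ^ 2) := Real.sqrt_pos.2 (by nlinarith)
  rcases le_total x 0 with h | h
  · exact (div_nonpos_of_nonpos_of_nonneg h hw.le).trans (by positivity)
  · rw [div_le_div_iff₀ hw (by positivity), one_mul]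
    apply Real.le_sqrt_of_sq_le
    rw [mul_pow, Real.sq_sqrt (by norm_num)]
    nlinarith

/-- Inversion of the curvature function `x ↦ x / √(1 - x²)` for a nonpositive bound. -/
lemma le_of_le_curv {a x : ℝ} (ha : a ≤ 0) (h1 : -1 < x) (h2 : x < 1)
    (h : a ≤ x / Real.sqrt (1 - x ^ 2)) : a / Real.sqrt (1 + a ^ 2) ≤ x := by
  have hp : 0 < 1 - x ^ 2 := by nlinarith
  have hw : 0 < Real.sqrt (1 - x ^ 2) := Real.sqrt_pos.2 hp
  have hr : 0 < Real.sqrt (1 + a ^ 2) := Real.sqrt_pos.2 (by positivity)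
  rcases le_total 0 x with hx | hx
  · exact (div_nonpos_of_nonpos_of_nonneg ha hr.le).trans hx
  · rw [le_div_iff₀ hw] at h
    rw [div_le_iff₀ hr]
    have hsq : x ^ 2 ≤ a ^ 2 * (1 - x ^ 2) := by
      have := pow_le_pow_left₀ (neg_nonneg.2 hx) (neg_le_neg h) 2
      rw [neg_sq, neg_sq, mul_pow, Real.sq_sqrt hp.le] at this
      exact this
    have hsq' : (x * Real.sqrt (1 + a ^ 2)) ^ 2 ≤ (-a) ^ 2 := by
      rw [mul_pow, Real.sq_sqrt (by positivity)]
      nlinarith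
    have := (abs_le_of_sq_le_sq' hsq' (by linarith)).1
    linarith

/-- Proposition: lower bound on the polar cap.  Let `γ > 0` and let an
axisymmetric configuration with `n ≥ 2` interfaces and mass `m = 0` be a critical point
of `E_γ`.  Then `z 1 ≥ a/√(1+a²)` where `a = −(6γ/e + 1/√3)`. -/
theorem first_interface_lower_bound (γ : ℝ) (hγ : 0 < γ)
    (n : ℕ) (hn : 2 ≤ n) (z : ℕ → ℝ) (hz : IsConfig n z)
    (hm : mass n z = 0) (hcrit : IsCritical γ n z) :
    (-(6 * γ / Real.exp 1 + 1 / Real.sqrt 3))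
        / Real.sqrt (1 + (-(6 * γ / Real.exp 1 + 1 / Real.sqrt 3)) ^ 2)
      ≤ z 1 := by
  have h0 : -1 < z 1 := by have := hz.2.2 0 1 (by omega) (by omega); rwa [hz.1] at this
  have h12 : z 1 < z 2 := hz.2.2 1 2 (by omega) (by omega)
  have h2 : z 2 < 1 := by
    have := hz.2.2 2 (n + 1) (by omega) le_rfl; rwa [hz.2.1] at this
  have hpos : 0 ≤ 6 * γ / Real.exp 1 := by positivity
  have hpos' : 0 ≤ 1 / Real.sqrt 3 := by positivity
  apply le_of_le_curv (by linarith) h0 (by linarith)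
  rcases le_or_gt (-1 / 2) (z 1) with h | h
  · have := curv_le (x := -z 1) (by linarith) (by linarith)
    rw [neg_sq, neg_div] at this
    linarith
  · have hc := curv_le (x := z 2) (by linarith) (by linarith [second_le hn hz hm])
    have hI := integral_lower hn hz hm h
    obtain ⟨lam, hl⟩ := hcrit
    have e1 := hl 1 le_rfl (by omega)
    have e2 := hl 2 (by omega) hn
    have hsub : pot n z (z 2) - pot n z (z 1)
        = ∫ s in z 1..z 2, xi n z s / (1 - s ^ 2) :=
      intervalIntegral.integral_interval_sub_left
        (quot_integrable n z (by norm_num) ⟨by linarith, h2⟩)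
        (quot_integrable n z (by norm_num) ⟨h0, by linarith⟩)
    rw [← hsub] at hI
    norm_num at e1 e2
    rw [neg_div] at e2
    have hg : 2 * γ ≤ 6 * γ / Real.exp 1 := by
      rw [le_div_iff₀ (Real.exp_pos 1)]
      nlinarith [Real.exp_one_lt_d9]
    nlinarith
end
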